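/- Let n be a positive integer with n ≡ 1 (mod 3) and let M = (n-1)/3 or M = n-1. Then, modulo [n]*Phi_n(q)^4, sum_{k=0}^{M} [6k+1] ((q;q^3)_k^6 / (q^3;q^3)_k^6) q^{3k} ≡ [n] * ((q^2;q^3)_{(n-1)/3}^3 / (q^3;q^3)_{(n-1)/3}^3) * ( 1 + [n]^2 (2 - q^n) * sum_{j=1}^{(n-1)/3} ( q^{3j-1}/[3j-1]^2 - q^{3j}/[3j]^2 ) ). -/

import Mathlib

open Finset

/-- The generator `q` of the field `ℚ(q)` of rational functions. -/
noncomputable def q : RatFunc ℚ := RatFunc.X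

/-- The `q`-integer `[r] = (1 - q^r)/(1 - q)`. -/
noncomputable def qint (r : ℤ) : RatFunc ℚ := (1 - q ^ r) / (1 - q)

/-- The `q`-shifted factorial `(x; b)_m = (1-x)(1-xb)⋯(1-x b^(m-1))`. -/
noncomputable def qpoch (x b : RatFunc ℚ) (m : ℕ) : RatFunc ℚ :=
  ∏ i ∈ Finset.range m, (1 - x * b ^ i)

/-- `f ≡ g (mod P)`: `f - g = P * (r/s)` with `s` coprime to `P`. -/
def qcong (f g : RatFunc ℚ) (P : Polynomial ℚ) : Prop :=
  ∃ r s : Polynomial ℚ, IsCoprime s P ∧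
    f - g = algebraMap (Polynomial ℚ) (RatFunc ℚ) P *
      (algebraMap (Polynomial ℚ) (RatFunc ℚ) r / algebraMap (Polynomial ℚ) (RatFunc ℚ) s)

/-!
Write `n = 3 * N + 1` and `Q = q ^ n`. Jackson's terminating `₈φ₇` sum with base `q ^ 3` evaluates
in closed form, for every `y`, the deformation of the sum in which four of the six equal
factors `1 - u` are split into `(1 - u * y) * (1 - u / y) * (1 - u * Q) * (1 - u / Q)`. Such a
splitting of `(1 - u) ^ 2` multiplies it by `1 - koebe u / koebe y`, so the deformation multiplies
the `k`-th term `c k` by `β y k * β Q k` for certain ratios `β`, and the value by a similar ratio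
`B y`, with `β 1 = B 1 = 1`. Combining the cases `y = 1` and `y = Q` gives
`∑ c k = ∑ c k * (1 - β Q k) ^ 2 + [n] * A * (2 - B Q)` for the product `A` in the theorem.

Since `1 / koebe Q = (1 - Q) ^ 2 / Q`, at a primitive `n`-th root of unity the first sum vanishes to
fourth order in `1 - Q`, and the last term is the right-hand side of the theorem up to fifth order.
There the `c k` are antisymmetric under `k ↔ N - k` while the leading coefficients of the
`1 - β Q k` are symmetric, so the coefficient of `(1 - Q) ^ 4` in the first sum vanishes as well and
the congruence holds modulo `Φ_n(q) ^ 5`. For the remaining divisors `d > 1` of `n` both sides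
vanish at a primitive `d`-th root of unity: the terms are periodic with period `d` up to a common
factor in each period, and their sum over a period vanishes by the same antisymmetry.
-/

section Values

variable {K L : Type*} [Field K] [Field L] [Algebra K L]

variable (K) in
/-- The graph of evaluation at `z`: the pairs of a rational function without pole at `z` and its
value there. As a relation it assigns no junk value at a pole, and the sum, product and difference
rules for values are the closure properties of this subring. -/
def valueGraph (z : L) : Subring (RatFunc K × L) where
  carrier := {x | ∃ r s : Polynomial K, Polynomial.aeval z s ≠ 0 ∧
    algebraMap _ (RatFunc K) r / algebraMap _ (RatFunc K) s = x.1 ∧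
    Polynomial.aeval z r / Polynomial.aeval z s = x.2}
  mul_mem' := by
    rintro _ _ ⟨r, s, hs, hx, hx'⟩ ⟨t, u, hu, hy, hy'⟩
    refine ⟨r * t, s * u, by simp [hs, hu], ?_, ?_⟩
    · simp only [map_mul, mul_div_mul_comm, hx, hy, Prod.fst_mul]
    · simp only [map_mul, mul_div_mul_comm, hx', hy', Prod.snd_mul]
  one_mem' := ⟨1, 1, by simp, by simp, by simp⟩
  add_mem' := by
    rintro _ _ ⟨r, s, hs, hx, hx'⟩ ⟨t, u, hu, hy, hy'⟩
    have hs0 : algebraMap _ (RatFunc K) s ≠ 0 :=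
      RatFunc.algebraMap_ne_zero fun h ↦ hs (by simp [h])
    have hu0 : algebraMap _ (RatFunc K) u ≠ 0 :=
      RatFunc.algebraMap_ne_zero fun h ↦ hu (by simp [h])
    refine ⟨r * u + s * t, s * u, by simp [hs, hu], ?_, ?_⟩
    · simp only [map_mul, map_add, ← div_add_div _ _ hs0 hu0, hx, hy, Prod.fst_add]
    · simp only [map_mul, map_add, ← div_add_div _ _ hs hu, hx', hy', Prod.snd_add]
  zero_mem' := ⟨0, 1, by simp, by simp, by simp⟩
  neg_mem' := by
    rintro _ ⟨r, s, hs, hx, hx'⟩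
    exact ⟨-r, s, hs, by simp only [map_neg, neg_div, hx, Prod.fst_neg],
      by simp only [map_neg, neg_div, hx', Prod.snd_neg]⟩

/-- The rational function `f` has no pole at `z` and takes the value `c` there. -/
def HasValueAt (z : L) (f : RatFunc K) (c : L) : Prop := (f, c) ∈ valueGraph K z

namespace HasValueAt

variable {z : L} {f g : RatFunc K} {a b : L}

theorem polynomial (r : Polynomial K) :
    HasValueAt z (algebraMap _ (RatFunc K) r) (Polynomial.aeval z r) :=
  ⟨r, 1, by simp, by simp, by simp⟩

theorem one : HasValueAt z (1 : RatFunc K) 1 := (valueGraph K z).one_mem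

theorem X : HasValueAt z (RatFunc.X : RatFunc K) z := by
  simpa using polynomial (z := z) Polynomial.X

theorem add (hf : HasValueAt z f a) (hg : HasValueAt z g b) : HasValueAt z (f + g) (a + b) :=
  (valueGraph K z).add_mem hf hg

theorem sub (hf : HasValueAt z f a) (hg : HasValueAt z g b) : HasValueAt z (f - g) (a - b) :=
  (valueGraph K z).sub_mem hf hg

theorem mul (hf : HasValueAt z f a) (hg : HasValueAt z g b) : HasValueAt z (f * g) (a * b) :=
  (valueGraph K z).mul_mem hf hg

theorem pow (hf : HasValueAt z f a) (k : ℕ) : HasValueAt z (f ^ k) (a ^ k) :=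
  (valueGraph K z).pow_mem hf k

theorem sum {ι : Type*} {s : Finset ι} {f : ι → RatFunc K} {a : ι → L}
    (h : ∀ i ∈ s, HasValueAt z (f i) (a i)) : HasValueAt z (∑ i ∈ s, f i) (∑ i ∈ s, a i) := by
  simpa only [HasValueAt, prod_mk_sum] using (valueGraph K z).sum_mem h

theorem prod {ι : Type*} {s : Finset ι} {f : ι → RatFunc K} {a : ι → L}
    (h : ∀ i ∈ s, HasValueAt z (f i) (a i)) : HasValueAt z (∏ i ∈ s, f i) (∏ i ∈ s, a i) := by
  simpa only [HasValueAt, prod_mk_prod] using (valueGraph K z).prod_mem h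

theorem inv (hf : HasValueAt z f a) (ha : a ≠ 0) : HasValueAt z f⁻¹ a⁻¹ := by
  obtain ⟨r, s, _, rfl, rfl⟩ := hf
  exact ⟨s, r, (div_ne_zero_iff.1 ha).1, (inv_div _ _).symm, (inv_div _ _).symm⟩

theorem div (hf : HasValueAt z f a) (hg : HasValueAt z g b) (hb : b ≠ 0) :
    HasValueAt z (f / g) (a / b) := by
  simpa only [div_eq_mul_inv] using hf.mul (hg.inv hb)

theorem ne_zero (hf : HasValueAt z f a) (ha : a ≠ 0) : f ≠ 0 := by
  obtain ⟨r, s, hs, rfl, rfl⟩ := hf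
  refine div_ne_zero (RatFunc.algebraMap_ne_zero ?_) (RatFunc.algebraMap_ne_zero ?_)
  · rintro rfl; simp at ha
  · rintro rfl; simp at hs

theorem one_sub_X_pow (m : ℕ) : HasValueAt z (1 - RatFunc.X ^ m : RatFunc K) (1 - z ^ m) :=
  one.sub (X.pow m)

end HasValueAt

variable (K) in
/-- The ring of rational functions without pole at `z`. -/
noncomputable def regularAt (z : L) : Subring (RatFunc K) :=
  (valueGraph K z).map (RingHom.fst (RatFunc K) L)

variable {z : L} {f g : RatFunc K}

theorem mem_regularAt : f ∈ regularAt K z ↔ ∃ c, HasValueAt z f c := by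
  simp [regularAt, Subring.mem_map, HasValueAt]

theorem HasValueAt.mem_regularAt {c : L} (h : HasValueAt z f c) : f ∈ regularAt K z := ⟨_, h, rfl⟩

variable (K) in
/-- The ideal of rational functions vanishing at `z`. It is encoded as a submodule of the field of
rational functions, so that its powers consist of rational functions as well; the `e`-th power
expresses vanishing to order `e`. -/
noncomputable def vanishingAt (z : L) : Submodule (regularAt K z) (RatFunc K) where
  carrier := {f | HasValueAt z f 0}
  add_mem' hf hg := by simpa using HasValueAt.add hf hg
  zero_mem' := (valueGraph K z).zero_mem
  smul_mem' := by
    rintro ⟨_, ⟨g, a⟩, hg, rfl⟩ f hf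
    simpa using! HasValueAt.mul hg hf

theorem mem_vanishingAt : f ∈ vanishingAt K z ↔ HasValueAt z f 0 := Iff.rfl

theorem mul_mem_of_mem_regularAt {I : Submodule (regularAt K z) (RatFunc K)}
    (hf : f ∈ regularAt K z) (hg : g ∈ I) : f * g ∈ I := I.smul_mem ⟨f, hf⟩ hg

theorem exists_eq_minpoly_pow_mul {e : ℕ} (hf : f ∈ vanishingAt K z ^ e) :
    ∃ g ∈ regularAt K z, f = algebraMap _ (RatFunc K) (minpoly K z) ^ e * g := by
  have hle : vanishingAt K z ≤ Submodule.span _ {algebraMap _ (RatFunc K) (minpoly K z)} := by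
    rintro _ ⟨r, s, hs, rfl, hr⟩
    obtain ⟨t, rfl⟩ := minpoly.dvd K z ((div_eq_zero_iff.1 hr).resolve_right hs)
    refine Submodule.mem_span_singleton.2 ⟨⟨algebraMap _ _ t / algebraMap _ _ s,
      ((HasValueAt.polynomial t).div (HasValueAt.polynomial s) hs).mem_regularAt⟩, ?_⟩
    rw [Subring.smul_def, smul_eq_mul, map_mul, div_mul_eq_mul_div, mul_comm]
  have hf' := pow_le_pow_left' hle e hf
  rw [Submodule.span_pow, Set.singleton_pow, Submodule.mem_span_singleton] at hf'
  obtain ⟨⟨g, hg⟩, rfl⟩ := hf'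
  exact ⟨g, hg, by rw [Subring.smul_def, smul_eq_mul, mul_comm]⟩

end Values

section Congruences

variable {f g : RatFunc ℚ}

theorem qcong_iff {P : Polynomial ℚ} :
    qcong f g P ↔ P ∣ (f - g).num ∧ IsCoprime (f - g).denom P := by
  constructor
  · rintro ⟨r, s, hs, h⟩
    obtain rfl | hs0 := eq_or_ne s 0
    · have hP : IsUnit P := isCoprime_zero_left.1 hs
      exact ⟨hP.dvd, isCoprime_one_right.of_isCoprime_of_dvd_right hP.dvd⟩
    rw [← mul_div_assoc, ← map_mul] at h
    have hden : (f - g).denom ∣ s := h ▸ RatFunc.denom_div_dvd _ _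
    exact ⟨hs.symm.dvd_of_dvd_mul_right ⟨r * (f - g).denom, by
      rw [← mul_assoc, (RatFunc.num_mul_eq_mul_denom_iff hs0).2 h]⟩,
      hs.of_isCoprime_of_dvd_left hden⟩
  · rintro ⟨⟨r, hr⟩, hco⟩
    exact ⟨r, _, hco, by rw [← mul_div_assoc, ← map_mul, ← hr, RatFunc.num_div_denom]⟩

theorem qcong_prod {ι : Type*} {s : Finset ι} {P : ι → Polynomial ℚ}
    (hco : (s : Set ι).Pairwise (Function.onFun IsCoprime P)) (h : ∀ i ∈ s, qcong f g (P i)) :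
    qcong f g (∏ i ∈ s, P i) := by
  simp only [qcong_iff] at h ⊢
  exact ⟨Finset.prod_dvd_of_coprime hco fun i hi ↦ (h i hi).1,
    IsCoprime.prod_right fun i hi ↦ (h i hi).2⟩

theorem qcong_minpoly_pow {L : Type*} [Field L] [Algebra ℚ L] {z : L} (hz : IsIntegral ℚ z)
    {e : ℕ} (h : f - g ∈ vanishingAt ℚ z ^ e) : qcong f g (minpoly ℚ z ^ e) := by
  obtain ⟨u, hu, hfg⟩ := exists_eq_minpoly_pow_mul h
  obtain ⟨_, r, s, hs, rfl, -⟩ := mem_regularAt.1 hu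
  refine ⟨r, s, IsCoprime.pow_right ?_, by rw [hfg, map_pow]⟩
  refine (((minpoly.irreducible hz).coprime_iff_not_dvd).2 fun hdvd ↦ hs ?_).symm
  exact (minpoly.dvd_iff).1 hdvd

theorem qcong_cyclotomic_pow {L : Type*} [Field L] [CharZero L] {z : L} {d e : ℕ} (hd : 0 < d)
    (hz : IsPrimitiveRoot z d) (h : f - g ∈ vanishingAt ℚ z ^ e) :
    qcong f g (Polynomial.cyclotomic d ℚ ^ e) := by
  rw [Polynomial.cyclotomic_eq_minpoly_rat hz hd]
  exact qcong_minpoly_pow (hz.isIntegral hd).tower_top h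

end Congruences

section JacksonSum

variable {F : Type*} [Field F]

/-- The `q`-shifted factorial `(x; p)_n` over an arbitrary field. -/
def qPochhammer (x p : F) (n : ℕ) : F := ∏ i ∈ range n, (1 - x * p ^ i)

theorem qPochhammer_zero (x p : F) : qPochhammer x p 0 = 1 := prod_range_zero _

theorem qPochhammer_succ (x p : F) (n : ℕ) :
    qPochhammer x p (n + 1) = qPochhammer x p n * (1 - x * p ^ n) := prod_range_succ _ _

theorem qPochhammer_succ' (x p : F) (n : ℕ) :
    qPochhammer x p (n + 1) = (1 - x) * qPochhammer (x * p) p n := by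
  simp only [qPochhammer, prod_range_succ', pow_zero, mul_one, pow_succ', mul_assoc, mul_comm]

theorem mul_div_mul_pow_succ (a p x : F) (n : ℕ) :
    a * p / x * p ^ n = a * p ^ (n + 1) / x := by ring

/-- The quotient `(x; p)_n / (a * p / x; p)_n` of paired parameters in a well-poised series. -/
def wellPoisedRatio (a p x : F) (n : ℕ) : F := qPochhammer x p n / qPochhammer (a * p / x) p n

theorem wellPoisedRatio_zero (a p x : F) : wellPoisedRatio a p x 0 = 1 := by
  simp only [wellPoisedRatio, qPochhammer_zero, div_one]

theorem wellPoisedRatio_succ (a p x : F) (n : ℕ) :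
    wellPoisedRatio a p x (n + 1) =
      wellPoisedRatio a p x n * ((1 - x * p ^ n) / (1 - a * p ^ (n + 1) / x)) := by
  simp only [wellPoisedRatio, qPochhammer_succ, mul_div_mul_comm, mul_div_mul_pow_succ]

/-- The `n`-th term of the very-well-poised series `₈φ₇` with base `p`. The special parameters
`± p * √a` contribute the first factor, and `a` itself the first `wellPoisedRatio`. -/
def wellPoisedTerm (a p b c d e f : F) (n : ℕ) : F :=
  (1 - a * p ^ (2 * n)) / (1 - a) *
    (wellPoisedRatio a p a n * wellPoisedRatio a p b n * wellPoisedRatio a p c n *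
      wellPoisedRatio a p d n * wellPoisedRatio a p e n * wellPoisedRatio a p f n) * p ^ n

/-- The common part of `wellPoisedRatio a p x (n + 1)` and `wellPoisedRatio a p (x * p) (n + 1)`,
used to compare a very-well-poised series with a contiguous one. -/
def shiftedRatio (a p x : F) (n : ℕ) : F := qPochhammer (x * p) p n / qPochhammer (a * p / x) p n

theorem wellPoisedRatio_succ_eq_shiftedRatio (a p x : F) (n : ℕ) :
    wellPoisedRatio a p x (n + 1) =
      shiftedRatio a p x n * ((1 - x) / (1 - a * p ^ (n + 1) / x)) := by
  simp only [wellPoisedRatio, shiftedRatio, qPochhammer_succ' x, qPochhammer_succ (a * p / x)]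
  rw [mul_comm (1 - x), mul_div_mul_comm, mul_div_mul_pow_succ]

theorem wellPoisedRatio_mul_succ_eq_shiftedRatio {p : F} (hp : p ≠ 0) (a x : F) (n : ℕ) :
    wellPoisedRatio a p (x * p) (n + 1) =
      shiftedRatio a p x n * ((1 - x * p ^ (n + 1)) / (1 - a / x)) := by
  simp only [wellPoisedRatio, shiftedRatio, mul_div_mul_right a x hp,
    qPochhammer_succ' (a / x), qPochhammer_succ (x * p)]
  rw [div_mul_eq_mul_div a x p, mul_comm (1 - a / x), ← div_mul_div_comm, pow_succ', mul_assoc x]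

theorem shiftedRatio_succ (a p x : F) (n : ℕ) :
    shiftedRatio a p x (n + 1) =
      shiftedRatio a p x n * ((1 - x * p ^ (n + 1)) / (1 - a * p ^ (n + 1) / x)) := by
  simp only [shiftedRatio, qPochhammer_succ, mul_div_mul_comm, mul_div_mul_pow_succ, pow_succ',
    mul_assoc]

theorem contiguous_identity_initial {a b c d e f : F} (h : b * c * d * e * f = a ^ 2) :
    (e - a) * (e * ((a - b * f) * (a - c * f) * (a - d * f))) -
        (f - a) * (f * ((a - b * e) * (a - c * e) * (a - d * e))) =
      a ^ 2 * (e - f) * (e * f) * ((1 - b) * (1 - c) * (1 - d)) := by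
  linear_combination (-(e - a) * f ^ 2 + (f - a) * e ^ 2 + (e - f) * a ^ 2) * h

theorem contiguous_identity {a b c d e f : F} (h : b * c * d * e * f = a ^ 2) (K : F) :
    K * (1 - a * K ^ 2) *
        ((1 - e * K) * (1 - f) * (e - a * K) * (e * ((a - b * f) * (a - c * f) * (a - d * f))) -
          (1 - f * K) * (1 - e) * (f - a * K) * (f * ((a - b * e) * (a - c * e) * (a - d * e)))) =
      (e - f) * (e * f) * (a ^ 2 * (1 - e * K) * (1 - f * K) *
            ((1 - a * K) * (1 - b * K) * (1 - c * K) * (1 - d * K)) -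
          (e - a * K) * (f - a * K) *
            ((1 - K) * (b - a * K) * (c - a * K) * (d - a * K))) := by
  linear_combination (K * (1 - a * K ^ 2) * (-f ^ 2 * (1 - e * K) * (1 - f) * (e - a * K) +
    e ^ 2 * (1 - f * K) * (1 - e) * (f - a * K)) +
    (e - f) * K ^ 3 * a ^ 2 * (1 - e * K) * (1 - f * K) * (1 - a * K) +
    (e - f) * (e - a * K) * (f - a * K) * (1 - K)) * h

theorem contiguous_step {a b c d e f K : F} (h : b * c * d * e * f = a ^ 2) (ha0 : a ≠ 0)
    (hea : e ≠ a) (hfa : f ≠ a) (heK : e ≠ a * K) (hfK : f ≠ a * K) :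
    a ^ 2 * (e - f) * (e * f) * ((1 - K) * (1 - a * K / b) * (1 - a * K / c) * (1 - a * K / d)) +
        (1 - a * K ^ 2) * K *
          ((e - a) * (e * ((a - b * f) * (a - c * f) * (a - d * f))) *
            ((1 - e * K) / (1 - a / e) * ((1 - f) / (1 - a * K / f))) -
          (f - a) * (f * ((a - b * e) * (a - c * e) * (a - d * e))) *
            ((1 - f * K) / (1 - a / f) * ((1 - e) / (1 - a * K / e)))) =
      a ^ 2 * (e - f) * (e * f) *
        ((1 - e * K) / (1 - a * K / e) * ((1 - f * K) / (1 - a * K / f))) *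
        ((1 - a * K) * (1 - b * K) * (1 - c * K) * (1 - d * K)) := by
  have hprod : b * c * d * e * f ≠ 0 := h ▸ pow_ne_zero 2 ha0
  simp only [mul_ne_zero_iff] at hprod
  obtain ⟨⟨⟨⟨hb0, hc0⟩, hd0⟩, he0⟩, hf0⟩ := hprod
  have hea' : e - a ≠ 0 := sub_ne_zero.2 hea
  have hfa' : f - a ≠ 0 := sub_ne_zero.2 hfa
  have heK' : e - a * K ≠ 0 := sub_ne_zero.2 heK
  have hfK' : f - a * K ≠ 0 := sub_ne_zero.2 hfK
  have hD : a ^ 2 * ((1 - K) * (1 - a * K / b) * (1 - a * K / c) * (1 - a * K / d)) =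
      (1 - K) * (b - a * K) * (c - a * K) * (d - a * K) * (e * f) := by
    rw [← h]
    field_simp
  have hidentity := contiguous_identity h K
  generalize (1 - a * K) * (1 - b * K) * (1 - c * K) * (1 - d * K) = A at hidentity ⊢
  generalize (1 - K) * (1 - a * K / b) * (1 - a * K / c) * (1 - a * K / d) = D at hD ⊢
  generalize e * ((a - b * f) * (a - c * f) * (a - d * f)) = α at hidentity ⊢
  generalize f * ((a - b * e) * (a - c * e) * (a - d * e)) = β at hidentity ⊢
  field_simp
  linear_combination hidentity + (e - f) * (e - a * K) * (f - a * K) * hD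

theorem wellPoisedRatio_mul_one_sub {a p x : F} {n : ℕ} (hx : x ≠ 0) (h : x ≠ a * p ^ (n + 1)) :
    wellPoisedRatio a p x n * (1 - x * p ^ n) =
      wellPoisedRatio a p x (n + 1) * (1 - a * p ^ (n + 1) / x) := by
  have hden : 1 - a * p ^ (n + 1) / x ≠ 0 := by
    rwa [ne_eq, sub_eq_zero, eq_div_iff hx, one_mul]
  rw [wellPoisedRatio_succ, mul_assoc, div_mul_cancel₀ _ hden]

-- The coefficients are chosen so that the combined terms telescope. In the terminating case below
-- the right-hand side vanishes, and the relation becomes the recursion behind Jackson's sum.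
theorem sum_wellPoisedTerm_contiguous {a p b c d e f : F} (h : b * c * d * e * f = a ^ 2)
    (hp : p ≠ 0) (ha0 : a ≠ 0) (ha : a ≠ 1) (hea : e ≠ a) (hfa : f ≠ a)
    (hden : ∀ x ∈ [a, b, c, d, e, f], ∀ k : ℕ, x ≠ a * p ^ (k + 1)) (m : ℕ) :
    (e - a) * (e * ((a - b * f) * (a - c * f) * (a - d * f))) *
          ∑ k ∈ range (m + 1), wellPoisedTerm a p b c d (e * p) f k -
        (f - a) * (f * ((a - b * e) * (a - c * e) * (a - d * e))) *
          ∑ k ∈ range (m + 1), wellPoisedTerm a p b c d e (f * p) k =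
      a ^ 2 * (e - f) * (e * f) / (1 - a) *
        (wellPoisedRatio a p a m * wellPoisedRatio a p b m * wellPoisedRatio a p c m *
          wellPoisedRatio a p d m * shiftedRatio a p e m * shiftedRatio a p f m) *
        ((1 - a * p ^ m) * (1 - b * p ^ m) * (1 - c * p ^ m) * (1 - d * p ^ m)) := by
  have hprod : b * c * d * e * f ≠ 0 := h ▸ pow_ne_zero 2 ha0
  simp only [mul_ne_zero_iff] at hprod
  obtain ⟨⟨⟨⟨hb0, hc0⟩, hd0⟩, he0⟩, hf0⟩ := hprod
  have ha1 : 1 - a ≠ 0 := sub_ne_zero.2 ha.symm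
  simp only [List.forall_mem_cons] at hden
  obtain ⟨haK, hbK, hcK, hdK, heK, hfK, -⟩ := hden
  induction m with
  | zero =>
    simp only [zero_add, sum_range_one, wellPoisedTerm, wellPoisedRatio_zero, shiftedRatio,
      qPochhammer_zero, pow_zero, mul_zero, mul_one, div_one, div_self ha1,
      contiguous_identity_initial h]
    field_simp
  | succ m ih =>
    have hstep := contiguous_step h ha0 hea hfa (heK m) (hfK m)
    have hAa := wellPoisedRatio_mul_one_sub ha0 (haK m)
    have hAb := wellPoisedRatio_mul_one_sub hb0 (hbK m)
    have hAc := wellPoisedRatio_mul_one_sub hc0 (hcK m)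
    have hAd := wellPoisedRatio_mul_one_sub hd0 (hdK m)
    rw [mul_div_cancel_left₀ _ ha0] at hAa
    rw [sum_range_succ _ (m + 1), sum_range_succ _ (m + 1), mul_add, mul_add, add_sub_add_comm, ih]
    simp only [wellPoisedTerm, wellPoisedRatio_mul_succ_eq_shiftedRatio hp,
      wellPoisedRatio_succ_eq_shiftedRatio _ _ e, wellPoisedRatio_succ_eq_shiftedRatio _ _ f,
      shiftedRatio_succ]
    calc
      _ = a ^ 2 * (e - f) * (e * f) / (1 - a) *
            ((wellPoisedRatio a p a m * (1 - a * p ^ m)) *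
              (wellPoisedRatio a p b m * (1 - b * p ^ m)) *
              (wellPoisedRatio a p c m * (1 - c * p ^ m)) *
              (wellPoisedRatio a p d m * (1 - d * p ^ m))) *
            shiftedRatio a p e m * shiftedRatio a p f m + _ := by congr 1; ring
      _ = _ := by
        rw [hAa, hAb, hAc, hAd, mul_comm 2 (m + 1), pow_mul]
        linear_combination (1 - a)⁻¹ * (wellPoisedRatio a p a (m + 1) *
          wellPoisedRatio a p b (m + 1) * wellPoisedRatio a p c (m + 1) *
          wellPoisedRatio a p d (m + 1) * shiftedRatio a p e m * shiftedRatio a p f m) * hstep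

theorem qPochhammer_inv_pow {p : F} (hp : p ≠ 0) {n k : ℕ} (h : n < k) :
    qPochhammer (p ^ n)⁻¹ p k = 0 :=
  prod_eq_zero (mem_range.2 h) <| by rw [inv_mul_cancel₀ (pow_ne_zero n hp), sub_self]

theorem sum_wellPoisedTerm_terminating_contiguous {a p b c d : F} (hp : p ≠ 0) (ha0 : a ≠ 0)
    (hb0 : b ≠ 0) (hc0 : c ≠ 0) (hd0 : d ≠ 0) (hp1 : ∀ k : ℕ, p ^ (k + 1) ≠ 1)
    (ha : ∀ k : ℕ, a * p ^ k ≠ 1) (hden : ∀ x ∈ [b, c, d], ∀ k : ℕ, x ≠ a * p ^ (k + 1))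
    (hbcd : ∀ k : ℤ, b * c * d ≠ a * p ^ k) {N : ℕ} {e f : F}
    (he : e = a ^ 2 * p ^ (N + 1) / (b * c * d)) (hf : f = (p ^ (N + 1))⁻¹) :
    (e - a) * (e * ((a - b * f) * (a - c * f) * (a - d * f))) *
        ∑ k ∈ range (N + 2), wellPoisedTerm a p b c d (e * p) f k =
      (f - a) * (f * ((a - b * e) * (a - c * e) * (a - d * e))) *
        ∑ k ∈ range (N + 1), wellPoisedTerm a p b c d e (f * p) k := by
  have hbcd0 : b * c * d ≠ 0 := mul_ne_zero (mul_ne_zero hb0 hc0) hd0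
  have hP : p ^ (N + 1) ≠ 0 := pow_ne_zero _ hp
  have hfp : f * p = (p ^ N)⁻¹ := by rw [hf, pow_succ]; field_simp
  have hea (k : ℕ) : e ≠ a * p ^ k := by
    intro h
    refine hbcd (N + 1 - k) (mul_left_cancel₀ (mul_ne_zero ha0 (pow_ne_zero k hp)) ?_)
    rw [he, div_eq_iff hbcd0] at h
    rw [← h, mul_mul_mul_comm, ← pow_two, ← zpow_natCast p k, ← zpow_add₀ hp, add_sub_cancel]
    norm_cast
  have hfa (k : ℕ) : f ≠ a * p ^ k := fun h ↦
    ha (k + (N + 1)) <| by rw [pow_add, ← mul_assoc, ← h, hf, inv_mul_cancel₀ hP]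
  have hbal : b * c * d * e * f = a ^ 2 := by
    rw [he, hf, mul_div_cancel₀ _ hbcd0, mul_inv_cancel_right₀ hP]
  have hden' : ∀ x ∈ [a, b, c, d, e, f], ∀ k : ℕ, x ≠ a * p ^ (k + 1) := by
    simp only [List.forall_mem_cons] at hden ⊢
    exact ⟨fun k h ↦ hp1 k (mul_left_cancel₀ ha0 (by rw [← h, mul_one])), hden.1, hden.2.1,
      hden.2.2.1, fun k ↦ hea _, fun k ↦ hfa _, List.forall_mem_nil _⟩
  have hcontig := sum_wellPoisedTerm_contiguous hbal hp ha0 (by simpa using ha 0)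
    (by simpa using hea 0) (by simpa using hfa 0) hden' (N + 1)
  have hboundary : shiftedRatio a p f (N + 1) = 0 := by
    rw [shiftedRatio, hfp, qPochhammer_inv_pow hp N.lt_succ_self, zero_div]
  have hlast : wellPoisedTerm a p b c d e (f * p) (N + 1) = 0 := by
    rw [wellPoisedTerm, wellPoisedRatio.eq_def a p (f * p), hfp,
      qPochhammer_inv_pow hp N.lt_succ_self, zero_div, mul_zero, mul_zero, zero_mul]
  rwa [hboundary, sum_range_succ _ (N + 1), sum_range_succ _ (N + 1), hlast, add_zero, mul_zero,
    mul_zero, zero_mul, sub_eq_zero, ← sum_range_succ] at hcontig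

theorem contiguous_coeff_left {a b c d e f P : F} (hP : P ≠ 0) (hb0 : b ≠ 0) (hc0 : c ≠ 0)
    (hd0 : d ≠ 0) (he : e = a ^ 2 * P / (b * c * d)) (hf : f = P⁻¹) :
    (e - a) * (e * ((a - b * f) * (a - c * f) * (a - d * f))) =
      a ^ 3 / P ^ 2 *
        ((1 - a * P / b) * (1 - a * P / c) * (1 - a * P / d) * (1 - a * P / (b * c * d))) := by
  have hf' {x} (hx : x ≠ 0) : a - x * f = -(x / P) * (1 - a * P / x) := by
    rw [hf]; field_simp; ring
  have he' : e - a = -a * (1 - a * P / (b * c * d)) := by rw [he]; field_simp; ring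
  rw [hf' hb0, hf' hc0, hf' hd0, he']
  generalize 1 - a * P / b = B
  generalize 1 - a * P / c = C
  generalize 1 - a * P / d = D
  generalize 1 - a * P / (b * c * d) = E
  rw [he]
  field_simp

theorem contiguous_coeff_right {a b c d e f P : F} (hP : P ≠ 0) (hb0 : b ≠ 0) (hc0 : c ≠ 0)
    (hd0 : d ≠ 0) (he : e = a ^ 2 * P / (b * c * d)) (hf : f = P⁻¹) :
    (f - a) * (f * ((a - b * e) * (a - c * e) * (a - d * e))) =
      a ^ 3 / P ^ 2 *
        ((1 - a * P) * (1 - a * P / (b * c)) * (1 - a * P / (b * d)) *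
          (1 - a * P / (c * d))) := by
  have hb : a - b * e = a * (1 - a * P / (c * d)) := by rw [he]; field_simp
  have hc : a - c * e = a * (1 - a * P / (b * d)) := by rw [he]; field_simp
  have hd : a - d * e = a * (1 - a * P / (b * c)) := by rw [he]; field_simp
  have hf' : f - a = P⁻¹ * (1 - a * P) := by rw [hf]; field_simp
  rw [hb, hc, hd, hf', hf]
  ring

theorem sum_wellPoisedTerm {a p b c d : F} (hp : p ≠ 0) (ha0 : a ≠ 0) (hb0 : b ≠ 0) (hc0 : c ≠ 0)
    (hd0 : d ≠ 0) (hp1 : ∀ k : ℕ, p ^ (k + 1) ≠ 1) (ha : ∀ k : ℕ, a * p ^ k ≠ 1)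
    (hden : ∀ x ∈ [b, c, d], ∀ k : ℕ, x ≠ a * p ^ (k + 1))
    (hbcd : ∀ k : ℤ, b * c * d ≠ a * p ^ k) (N : ℕ) :
    ∑ k ∈ range (N + 1),
        wellPoisedTerm a p b c d (a ^ 2 * p ^ (N + 1) / (b * c * d)) (p ^ N)⁻¹ k =
      qPochhammer (a * p) p N * qPochhammer (a * p / (b * c)) p N *
          qPochhammer (a * p / (b * d)) p N * qPochhammer (a * p / (c * d)) p N /
        (qPochhammer (a * p / b) p N * qPochhammer (a * p / c) p N *
          qPochhammer (a * p / d) p N * qPochhammer (a * p / (b * c * d)) p N) := by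
  induction N with
  | zero =>
    have ha1 : 1 - a ≠ 0 := sub_ne_zero.2 (by simpa using (ha 0).symm)
    simp [wellPoisedTerm, wellPoisedRatio, qPochhammer_zero, ha1]
  | succ N ih =>
    have hP : p ^ (N + 1) ≠ 0 := pow_ne_zero _ hp
    have hne {x : F} (hx : x ≠ 0) (h : x ≠ a * p ^ (N + 1)) : 1 - a * p ^ (N + 1) / x ≠ 0 :=
      sub_ne_zero.2 fun h' ↦ h ((div_eq_one_iff_eq hx).1 h'.symm).symm
    have hbcd0 : b * c * d ≠ 0 := mul_ne_zero (mul_ne_zero hb0 hc0) hd0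
    obtain ⟨e, he⟩ : ∃ e, e = a ^ 2 * p ^ (N + 1) / (b * c * d) := ⟨_, rfl⟩
    obtain ⟨f, hf⟩ : ∃ f, f = (p ^ (N + 1))⁻¹ := ⟨_, rfl⟩
    have hrec := sum_wellPoisedTerm_terminating_contiguous hp ha0 hb0 hc0 hd0 hp1 ha hden hbcd he hf
    have hfp : f * p = (p ^ N)⁻¹ := by rw [hf, pow_succ]; field_simp
    have hep : a ^ 2 * p ^ (N + 1 + 1) / (b * c * d) = e * p := by rw [he]; ring
    rw [contiguous_coeff_left hP hb0 hc0 hd0 he hf, contiguous_coeff_right hP hb0 hc0 hd0 he hf,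
      hfp, he, ih, ← he] at hrec
    simp only [List.forall_mem_cons] at hden
    have hD := mul_ne_zero (mul_ne_zero (mul_ne_zero (hne hb0 (hden.1 N)) (hne hc0 (hden.2.1 N)))
      (hne hd0 (hden.2.2.1 N))) (hne hbcd0 (by exact_mod_cast hbcd (N + 1)))
    rw [hep, ← hf]
    have hsplit (x₁ x₂ x₃ x₄ y₁ y₂ y₃ y₄ : F) : x₁ * y₁ * (x₂ * y₂) * (x₃ * y₃) * (x₄ * y₄) =
        x₁ * x₂ * x₃ * x₄ * (y₁ * y₂ * y₃ * y₄) := by ring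
    have hcancel (C x y m : F) {D : F} (hD : D ≠ 0) :
        C * y * (x / m) = C * D * (x * y / (m * D)) := by
      rw [mul_div_mul_comm, mul_assoc C D, mul_left_comm D, mul_div_cancel₀ _ hD, mul_assoc C,
        mul_comm y]
    refine mul_left_cancel₀ (mul_ne_zero (div_ne_zero (pow_ne_zero 3 ha0) (pow_ne_zero 2 hP)) hD) ?_
    simp only [hrec, qPochhammer_succ, mul_div_mul_pow_succ, mul_assoc a p, ← pow_succ', hsplit]
    exact hcancel _ _ _ _ hD

end JacksonSum

section Koebe

variable {F : Type*} [Field F]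

/-- The Koebe function. It measures how `(1 - u) ^ 2` changes under the splitting
`(1 - u * y) * (1 - u / y)`, see `one_sub_mul_mul_one_sub_div`. -/
def koebe (u : F) : F := u / (1 - u) ^ 2

theorem koebe_one : koebe (1 : F) = 0 := by simp [koebe]

theorem koebe_ne_zero {u : F} (hu0 : u ≠ 0) (hu : u ≠ 1) : koebe u ≠ 0 :=
  div_ne_zero hu0 (pow_ne_zero 2 (sub_ne_zero.2 hu.symm))

theorem inv_koebe (u : F) : (koebe u)⁻¹ = (1 - u) ^ 2 / u := inv_div _ _

theorem koebe_inv (u : F) : koebe u⁻¹ = koebe u := by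
  obtain rfl | hu := eq_or_ne u 0
  · rw [inv_zero]
  have h : 1 - u⁻¹ = -(1 - u) / u := by field_simp; ring
  rw [koebe, koebe, h, div_pow, neg_sq]
  field_simp

theorem one_sub_sq_mul_koebe {u : F} (hu : u ≠ 1) : (1 - u) ^ 2 * koebe u = u :=
  mul_div_cancel₀ _ (pow_ne_zero 2 (sub_ne_zero.2 hu.symm))

theorem one_sub_mul_mul_one_sub_div {u y : F} (hu : u ≠ 1) (hy : y ≠ 0) :
    (1 - u * y) * (1 - u / y) = (1 - u) ^ 2 * (1 - (koebe y)⁻¹ * koebe u) := by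
  rw [mul_sub ((1 - u) ^ 2), mul_left_comm, one_sub_sq_mul_koebe hu, inv_koebe]
  field_simp
  ring

/-- The quotient `(z ^ c; z ^ r)_k / (z ^ r; z ^ r)_k`. -/
def pochRatio (z : F) (r c k : ℕ) : F :=
  ∏ i ∈ range k, (1 - z ^ (r * i + c)) / (1 - z ^ (r * i + r))

/-- The additive counterpart of `pochRatio`, with `koebe u` in place of `1 - u`. -/
def koebeSum (z : F) (r c k : ℕ) : F :=
  ∑ i ∈ range k, (koebe (z ^ (r * i + c)) - koebe (z ^ (r * i + r)))

/-- The factor by which the square of `pochRatio` changes when each `(1 - u) ^ 2` in it is split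
into `(1 - u * y) * (1 - u / y)`; the parameter `e` stands for `(koebe y)⁻¹`. -/
def koebeRatio (e z : F) (r c k : ℕ) : F :=
  ∏ i ∈ range k, (1 - e * koebe (z ^ (r * i + c))) / (1 - e * koebe (z ^ (r * i + r)))

theorem koebeRatio_zero_left (z : F) (r c k : ℕ) : koebeRatio 0 z r c k = 1 := by
  simp [koebeRatio]

/-- The `k`-th term of the truncated hypergeometric sum of the theorem, for `z` in place of `q`. -/
def summand (z : F) (k : ℕ) : F :=
  (1 - z ^ (6 * k + 1)) / (1 - z) * pochRatio z 3 1 k ^ 6 * z ^ (3 * k)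

/-- The right-hand side of the congruence of the theorem for `n = 3 * N + 1`, with `z` in place of
`q`. -/
def closedForm (z : F) (N : ℕ) : F :=
  (1 - z ^ (3 * N + 1)) / (1 - z) * pochRatio z 3 2 N ^ 3 *
    (1 + (1 - z ^ (3 * N + 1)) ^ 2 * (2 - z ^ (3 * N + 1)) * koebeSum z 3 2 N)

theorem pochRatio_eq_div (z : F) (r c k : ℕ) :
    pochRatio z r c k = qPochhammer (z ^ c) (z ^ r) k / qPochhammer (z ^ r) (z ^ r) k := by
  simp only [pochRatio, prod_div_distrib, qPochhammer, pow_add, pow_mul, mul_comm]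

theorem qPochhammer_mul_mul_qPochhammer_div {x p y : F} {k : ℕ} (hy : y ≠ 0)
    (hx : ∀ i < k, x * p ^ i ≠ 1) :
    qPochhammer (x * y) p k * qPochhammer (x / y) p k =
      qPochhammer x p k ^ 2 * ∏ i ∈ range k, (1 - (koebe y)⁻¹ * koebe (x * p ^ i)) := by
  simp only [qPochhammer, ← prod_pow, ← prod_mul_distrib]
  refine prod_congr rfl fun i hi ↦ ?_
  rw [mul_right_comm, div_mul_eq_mul_div, one_sub_mul_mul_one_sub_div (hx i (mem_range.1 hi)) hy]

theorem qPochhammer_split_div_split {z y : F} {r c k : ℕ} (hz : ∀ m : ℕ, 0 < m → z ^ m ≠ 1)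
    (hr : 0 < r) (hc : 0 < c) (hy : y ≠ 0) :
    qPochhammer (z ^ c * y) (z ^ r) k * qPochhammer (z ^ c / y) (z ^ r) k /
        (qPochhammer (z ^ r * y) (z ^ r) k * qPochhammer (z ^ r / y) (z ^ r) k) =
      pochRatio z r c k ^ 2 * koebeRatio (koebe y)⁻¹ z r c k := by
  have hne {s : ℕ} (hs : 0 < s) (i : ℕ) : z ^ s * (z ^ r) ^ i ≠ 1 := by
    rw [← pow_mul, ← pow_add]
    exact hz _ (by positivity)
  rw [qPochhammer_mul_mul_qPochhammer_div hy fun i _ ↦ hne hc i,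
    qPochhammer_mul_mul_qPochhammer_div hy fun i _ ↦ hne hr i, mul_div_mul_comm, pochRatio_eq_div,
    div_pow, koebeRatio, prod_div_distrib]
  simp only [← pow_mul, ← pow_add, add_comm]

theorem qPochhammer_mul_div_qPochhammer {x p : F} {k : ℕ} (hx : ∀ i ≤ k, x * p ^ i ≠ 1) :
    qPochhammer (x * p) p k / qPochhammer x p k = (1 - x * p ^ k) / (1 - x) := by
  have h0 : 1 - x ≠ 0 := sub_ne_zero.2 (by simpa using (hx 0 k.zero_le).symm)
  have hk : qPochhammer x p k ≠ 0 :=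
    prod_ne_zero_iff.2 fun i hi ↦ sub_ne_zero.2 (hx i (mem_range.1 hi).le).symm
  rw [div_eq_div_iff hk h0, mul_comm, ← qPochhammer_succ', qPochhammer_succ, mul_comm]

theorem wellPoisedTerm_eq_summand_mul {z y w : F} (hz : ∀ m : ℕ, 0 < m → z ^ m ≠ 1) (hz0 : z ≠ 0)
    (hy : y ≠ 0) (hw : w ≠ 0) (k : ℕ) :
    wellPoisedTerm z (z ^ 3) z (z * y) (z / y) (z * w) (z / w) k =
      summand z k * koebeRatio (koebe y)⁻¹ z 3 1 k * koebeRatio (koebe w)⁻¹ z 3 1 k := by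
  have hdiag : wellPoisedRatio z (z ^ 3) z k = pochRatio z 3 1 k := by
    rw [wellPoisedRatio, mul_div_cancel_left₀ _ hz0, pochRatio_eq_div, pow_one]
  have hcancel (y : F) : z * z ^ 3 / (z / y) = z ^ 3 * y := by field_simp
  have hsplit {y : F} (hy : y ≠ 0) :
      wellPoisedRatio z (z ^ 3) (z * y) k * wellPoisedRatio z (z ^ 3) (z / y) k =
        pochRatio z 3 1 k ^ 2 * koebeRatio (koebe y)⁻¹ z 3 1 k := by
    rw [← qPochhammer_split_div_split hz three_pos one_pos hy, pow_one, wellPoisedRatio,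
      wellPoisedRatio, mul_div_mul_left _ _ hz0, hcancel, div_mul_div_comm,
      mul_comm (qPochhammer (z ^ 3 / y) _ _)]
  calc
    _ = (1 - z * (z ^ 3) ^ (2 * k)) / (1 - z) * (wellPoisedRatio z (z ^ 3) z k ^ 2 *
        (wellPoisedRatio z (z ^ 3) (z * y) k * wellPoisedRatio z (z ^ 3) (z / y) k) *
        (wellPoisedRatio z (z ^ 3) (z * w) k * wellPoisedRatio z (z ^ 3) (z / w) k)) *
          (z ^ 3) ^ k := by rw [wellPoisedTerm]; ring
    _ = _ := by rw [hdiag, hsplit hy, hsplit hw, summand]; ring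

theorem zpow_ne_one {z : F} (hz : ∀ m : ℕ, 0 < m → z ^ m ≠ 1) {m : ℤ} (hm : m ≠ 0) :
    z ^ m ≠ 1 := by
  obtain ⟨k, rfl | rfl⟩ := m.eq_nat_or_neg
  · rw [zpow_natCast]
    exact hz k (by lia)
  · rw [zpow_neg, zpow_natCast, ne_eq, inv_eq_one]
    exact hz k (by lia)

theorem sum_wellPoisedTerm_eq_qPochhammer {z y : F} {N : ℕ} (hz : ∀ m : ℕ, 0 < m → z ^ m ≠ 1)
    (hz0 : z ≠ 0) (hy0 : y ≠ 0) (hy : ∀ k : ℕ, y ≠ z ^ (3 * k + 3))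
    (hy' : ∀ k : ℕ, y⁻¹ ≠ z ^ (3 * k + 3)) :
    ∑ k ∈ range (N + 1), wellPoisedTerm z (z ^ 3) z (z * y) (z / y) (z * z ^ (3 * N + 1))
        (z / z ^ (3 * N + 1)) k =
      qPochhammer (z * z ^ 3) (z ^ 3) N * qPochhammer (z ^ 2 / y) (z ^ 3) N *
          qPochhammer (z ^ 2 * y) (z ^ 3) N * qPochhammer (z ^ 2) (z ^ 3) N /
        (qPochhammer (z ^ 3) (z ^ 3) N * qPochhammer (z ^ 3 / y) (z ^ 3) N *
          qPochhammer (z ^ 3 * y) (z ^ 3) N * qPochhammer z (z ^ 3) N) := by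
  have hbcd : z * (z * y) * (z / y) = z ^ 3 := by field_simp
  have hden : ∀ x ∈ [z, z * y, z / y], ∀ k : ℕ, x ≠ z * (z ^ 3) ^ (k + 1) := by
    simp only [List.forall_mem_cons, ← pow_mul, mul_add_one, ne_eq, left_eq_mul₀ hz0,
      div_eq_mul_inv, mul_right_inj' hz0]
    exact ⟨fun k ↦ hz _ (by positivity), hy, hy', List.forall_mem_nil _⟩
  have hbcd' (k : ℤ) : z * (z * y) * (z / y) ≠ z * (z ^ 3) ^ k := by
    intro h
    refine zpow_ne_one hz (m := 2 - 3 * k) (by lia) ?_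
    rw [zpow_sub₀ hz0, zpow_mul, div_eq_one_iff_eq (zpow_ne_zero _ (zpow_ne_zero 3 hz0))]
    refine mul_left_cancel₀ hz0 ?_
    rw [zpow_ofNat, zpow_ofNat, ← h, hbcd, ← pow_succ']
  have he : z ^ 2 * (z ^ 3) ^ (N + 1) / z ^ 3 = z * z ^ (3 * N + 1) := by field_simp; ring
  have hf : ((z ^ 3) ^ N)⁻¹ = z / z ^ (3 * N + 1) := by field_simp; ring
  have hbc : z * z ^ 3 / (z * (z * y)) = z ^ 2 / y := by field_simp
  have hbd : z * z ^ 3 / (z * (z / y)) = z ^ 2 * y := by field_simp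
  have hcd : z * z ^ 3 / (z * y * (z / y)) = z ^ 2 := by field_simp
  have hc : z * z ^ 3 / (z * y) = z ^ 3 / y := by field_simp
  have hd : z * z ^ 3 / (z / y) = z ^ 3 * y := by field_simp
  have hsum := sum_wellPoisedTerm (pow_ne_zero 3 hz0) hz0 hz0 (mul_ne_zero hz0 hy0)
    (div_ne_zero hz0 hy0) (fun k ↦ by rw [← pow_mul]; exact hz _ (by positivity))
    (fun k ↦ by rw [← pow_mul, ← pow_succ']; exact hz _ (by positivity)) hden hbcd' N
  rwa [hbcd, he, hf, hbc, hbd, hcd, hc, hd, mul_div_cancel_left₀ _ hz0,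
    mul_div_cancel_right₀ _ (pow_ne_zero 3 hz0)] at hsum

theorem sum_summand_mul_koebeRatio {z y : F} {N : ℕ} (hz : ∀ m : ℕ, 0 < m → z ^ m ≠ 1)
    (hz0 : z ≠ 0) (hy0 : y ≠ 0) (hy : ∀ k : ℕ, y ≠ z ^ (3 * k + 3))
    (hy' : ∀ k : ℕ, y⁻¹ ≠ z ^ (3 * k + 3)) :
    ∑ k ∈ range (N + 1), summand z k * koebeRatio (koebe y)⁻¹ z 3 1 k *
        koebeRatio (koebe (z ^ (3 * N + 1)))⁻¹ z 3 1 k =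
      (1 - z ^ (3 * N + 1)) / (1 - z) * pochRatio z 3 2 N ^ 3 *
        koebeRatio (koebe y)⁻¹ z 3 2 N := by
  have hnext : qPochhammer (z * z ^ 3) (z ^ 3) N / qPochhammer z (z ^ 3) N =
      (1 - z ^ (3 * N + 1)) / (1 - z) := by
    rw [pow_succ' z (3 * N), pow_mul]
    refine qPochhammer_mul_div_qPochhammer fun i _ ↦ ?_
    rw [← pow_mul, ← pow_succ']
    exact hz _ (Nat.succ_pos _)
  simp only [← wellPoisedTerm_eq_summand_mul hz hz0 hy0 (pow_ne_zero _ hz0)]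
  calc
    _ = qPochhammer (z * z ^ 3) (z ^ 3) N / qPochhammer z (z ^ 3) N * pochRatio z 3 2 N *
        (qPochhammer (z ^ 2 * y) (z ^ 3) N * qPochhammer (z ^ 2 / y) (z ^ 3) N /
          (qPochhammer (z ^ 3 * y) (z ^ 3) N * qPochhammer (z ^ 3 / y) (z ^ 3) N)) := by
      rw [sum_wellPoisedTerm_eq_qPochhammer hz hz0 hy0 hy hy', pochRatio_eq_div]
      ring
    _ = _ := by
      rw [hnext, qPochhammer_split_div_split hz three_pos two_pos hy0]
      ring

theorem sum_summand_eq {z : F} (hz : ∀ m : ℕ, 0 < m → z ^ m ≠ 1) (hz0 : z ≠ 0) (N : ℕ) :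
    ∑ k ∈ range (N + 1), summand z k =
      ∑ k ∈ range (N + 1),
          summand z k * (1 - koebeRatio (koebe (z ^ (3 * N + 1)))⁻¹ z 3 1 k) ^ 2 +
        (1 - z ^ (3 * N + 1)) / (1 - z) * pochRatio z 3 2 N ^ 3 *
          (2 - koebeRatio (koebe (z ^ (3 * N + 1)))⁻¹ z 3 2 N) := by
  have hlin := sum_summand_mul_koebeRatio (N := N) hz hz0 one_ne_zero
    (fun k ↦ (hz _ (Nat.succ_pos _)).symm)
    (fun k ↦ by rw [inv_one]; exact (hz _ (Nat.succ_pos _)).symm)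
  have hquad := sum_summand_mul_koebeRatio (N := N) hz hz0 (pow_ne_zero (3 * N + 1) hz0)
    (fun k h ↦ zpow_ne_one hz (m := 3 * N + 1 - (3 * k + 3)) (by lia) <| by
      rw [zpow_sub₀ hz0, div_eq_one_iff_eq (zpow_ne_zero _ hz0)]; exact_mod_cast h)
    (fun k h ↦ hz (3 * N + 1 + (3 * k + 3)) (Nat.succ_pos _) <| by
      rw [pow_add, ← h, mul_inv_cancel₀ (pow_ne_zero _ hz0)])
  simp only [koebe_one, inv_zero, koebeRatio_zero_left, mul_one] at hlin
  rw [mul_sub, ← hquad, ← hlin, sum_mul, ← sum_sub_distrib, ← sum_add_distrib]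
  exact sum_congr rfl fun k _ ↦ by ring

end Koebe

section Reversal

@[to_additive]
theorem prod_range_mul_prod_range_reflect {M : Type*} [CommMonoid M] {f g : ℕ → M} {j k : ℕ}
    (h : ∀ i i' : ℕ, i + i' + 1 = j + k → f i = g i') :
    (∏ i ∈ range j, f i) * ∏ i ∈ range k, g i = ∏ i ∈ range (j + k), f i := by
  rw [prod_range_add]
  congr 1
  refine prod_bij' (fun i _ ↦ k - 1 - i) (fun i _ ↦ k - 1 - i) ?_ ?_ ?_ ?_ ?_
  all_goals intro i hi; rw [mem_range] at hi
  · exact mem_range.2 (by lia)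
  · exact mem_range.2 (by lia)
  · lia
  · lia
  · exact (h _ _ (by lia)).symm

theorem sum_range_succ_eq_zero_of_antisymm {R : Type*} [Ring R] [NoZeroDivisors R] [CharZero R]
    {f : ℕ → R} {N : ℕ} (h : ∀ j k : ℕ, j + k = N → f j = -f k) :
    ∑ k ∈ range (N + 1), f k = 0 := by
  refine self_eq_neg.1 ?_
  conv_rhs => rw [← sum_range_reflect, ← sum_neg_distrib]
  refine sum_congr rfl fun k hk ↦ h _ _ ?_
  have := mem_range.1 hk
  lia

variable {F : Type*} [Field F] {z : F} {j k : ℕ}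

theorem koebe_pow_reflect {m m' : ℕ} (h : z ^ (m + m') = 1) : koebe (z ^ m) = koebe (z ^ m') := by
  rw [← koebe_inv, ← eq_inv_of_mul_eq_one_right (by rwa [← pow_add])]

theorem koebe_pow_mul_add_reflect {r c : ℕ} (hz : z ^ (r * (j + k) + c) = 1) (i i' : ℕ)
    (h : i + i' + 1 = j + k) : koebe (z ^ (r * i + c)) = koebe (z ^ (r * i' + r)) :=
  koebe_pow_reflect <| by rw [← hz, ← h]; ring_nf

theorem koebeSum_reflect {r c : ℕ} (hz : z ^ (r * (j + k) + c) = 1) :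
    koebeSum z r c j = koebeSum z r c k := by
  have hj := sum_range_add_sum_range_reflect (koebe_pow_mul_add_reflect hz)
  have hk := sum_range_add_sum_range_reflect (koebe_pow_mul_add_reflect (add_comm j k ▸ hz))
  rw [koebeSum, koebeSum, sum_sub_distrib, sum_sub_distrib, sub_eq_sub_iff_add_eq_add, hj, hk,
    add_comm j k]

theorem pochRatio_sq_mul_prod_koebe {r c s : ℕ} (hr : c + s = r)
    (hu : ∀ i < k, z ^ (r * i + c) ≠ 1) :
    pochRatio z r c k ^ 2 * z ^ (s * k) * ∏ i ∈ range k, koebe (z ^ (r * i + c)) =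
      ∏ i ∈ range k, koebe (z ^ (r * i + r)) := by
  rw [pochRatio, ← prod_pow, pow_mul, pow_eq_prod_const, ← prod_mul_distrib,
    ← prod_mul_distrib]
  refine prod_congr rfl fun i hi ↦ ?_
  rw [div_pow, mul_right_comm, div_mul_eq_mul_div, one_sub_sq_mul_koebe (hu i (mem_range.1 hi)),
    div_mul_eq_mul_div, ← pow_add, add_assoc, hr, koebe]

theorem pochRatio_sq_reflect {r c s : ℕ} (hr : c + s = r) (hz0 : z ≠ 0)
    (hz : z ^ (r * (j + k) + c) = 1) (hu : ∀ i < j + k, z ^ (r * i + c) ≠ 1) :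
    pochRatio z r c j ^ 2 * z ^ (s * j) = pochRatio z r c k ^ 2 * z ^ (s * k) := by
  have hne {l : ℕ} (hl : l ≤ j + k) : ∏ i ∈ range l, koebe (z ^ (r * i + c)) ≠ 0 :=
    prod_ne_zero_iff.2 fun i hi ↦
      koebe_ne_zero (pow_ne_zero _ hz0) (hu i ((mem_range.1 hi).trans_le hl))
  have hj := prod_range_mul_prod_range_reflect (koebe_pow_mul_add_reflect hz)
  have hk := prod_range_mul_prod_range_reflect (koebe_pow_mul_add_reflect (add_comm j k ▸ hz))
  rw [← pochRatio_sq_mul_prod_koebe hr fun i hi ↦ hu i (by lia)] at hj hk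
  rw [add_comm k j, ← hj] at hk
  refine mul_right_cancel₀ (mul_ne_zero (hne (j.le_add_right k)) (hne (k.le_add_left j))) ?_
  linear_combination hk

theorem summand_reflect (hz0 : z ≠ 0) (hz : z ^ (3 * (j + k) + 1) = 1)
    (hu : ∀ i < j + k, z ^ (3 * i + 1) ≠ 1) : summand z j = -summand z k := by
  have hpoch := pochRatio_sq_reflect (s := 2) rfl hz0 hz hu
  have hfactor (k : ℕ) : summand z k * z ^ (3 * k) = (1 - z ^ (6 * k + 1)) / (1 - z) *
      (pochRatio z 3 1 k ^ 2 * z ^ (2 * k)) ^ 3 := by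
    rw [summand]; ring
  refine mul_right_cancel₀ (pow_ne_zero (3 * j) hz0) ?_
  refine mul_right_cancel₀ (pow_ne_zero (3 * k) hz0) ?_
  rw [hfactor j, hpoch, neg_mul, neg_mul, mul_right_comm (summand z k), hfactor k]
  linear_combination -(z ^ (3 * j) + z ^ (3 * k)) * (1 - z)⁻¹ *
    (pochRatio z 3 1 k ^ 2 * z ^ (2 * k)) ^ 3 * hz

end Reversal

section PrimitiveRoots

variable {L : Type*} [Field L] {z : L} {d N : ℕ}

theorem coprime_three_of_pow_eq_one (hz : IsPrimitiveRoot z d) (h : z ^ (3 * N + 1) = 1) :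
    Nat.Coprime 3 d :=
  Nat.Coprime.coprime_dvd_right (hz.dvd_of_pow_eq_one _ h) (by simp)

theorem pow_mul_add_ne_one {r c i j : ℕ} (hz : IsPrimitiveRoot z d) (hr : r.Coprime d)
    (hij : i < j) (hjd : j < d) (hj : z ^ (r * j + c) = 1) : z ^ (r * i + c) ≠ 1 := by
  intro hi
  have hdvd : d ∣ r * (j - i) := by
    have := Nat.dvd_sub (hz.dvd_of_pow_eq_one _ hj) (hz.dvd_of_pow_eq_one _ hi)
    rwa [Nat.add_sub_add_right, ← Nat.mul_sub] at this
  have := Nat.le_of_dvd (Nat.sub_pos_of_lt hij) (hr.symm.dvd_of_dvd_mul_left hdvd)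
  lia

theorem pow_mul_add_self_ne_one {r i : ℕ} (hz : IsPrimitiveRoot z d) (hr : r.Coprime d)
    (hi : i + 1 < d) : z ^ (r * i + r) ≠ 1 := by
  refine pow_mul_add_ne_one hz hr (j := d - 1) (by lia) (by lia) ?_
  rw [← mul_add_one, Nat.sub_add_cancel (by lia), mul_comm, pow_mul, hz.pow_eq_one, one_pow]

theorem sum_summand_mul_eq_zero [CharZero L] (hz : IsPrimitiveRoot z d) (hN : N < d)
    (h : z ^ (3 * N + 1) = 1) {w : ℕ → L} (hw : ∀ j k : ℕ, j + k = N → w j = w k) :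
    ∑ k ∈ range (N + 1), summand z k * w k = 0 := by
  refine sum_range_succ_eq_zero_of_antisymm fun j k hjk ↦ ?_
  rw [hw j k hjk, summand_reflect (hz.ne_zero hN.ne_bot) (by rwa [hjk]), neg_mul]
  exact fun i hi ↦
    pow_mul_add_ne_one hz (coprime_three_of_pow_eq_one hz h) (hjk ▸ hi) hN h

theorem pochRatio_eq_zero {r c i k : ℕ} (hik : i < k) (hi : z ^ (r * i + c) = 1) :
    pochRatio z r c k = 0 :=
  prod_eq_zero (mem_range.2 hik) (by rw [hi, sub_self, zero_div])

theorem sum_range_summand_eq_zero [CharZero L] (hz : IsPrimitiveRoot z d) (h : z ^ (3 * N + 1) = 1)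
    {t : ℕ} (hNt : N < t) (htd : t ≤ d) : ∑ s ∈ range t, summand z s = 0 := by
  rw [← sum_subset (range_mono hNt)]
  · simpa using sum_summand_mul_eq_zero (w := 1) hz (by lia) h fun _ _ _ ↦ rfl
  · intro s _ hs
    rw [summand, pochRatio_eq_zero (by simpa using hs) h]
    simp

theorem pochRatio_add (z : L) (r c k s : ℕ) : pochRatio z r c (k + s) = pochRatio z r c k *
    ∏ i ∈ range s, (1 - z ^ (r * (k + i) + c)) / (1 - z ^ (r * (k + i) + r)) :=
  prod_range_add _ _ _

theorem pow_mul_add_period (hz : z ^ d = 1) (r c m i : ℕ) :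
    z ^ (r * (d * m + i) + c) = z ^ (r * i + c) := by
  rw [mul_add, add_assoc, mul_left_comm, pow_add, pow_mul, hz, one_pow, one_mul]

theorem exists_pow_mul_add_eq_one {r : ℕ} (hz : IsPrimitiveRoot z d) (hd : 0 < d)
    (hr : r.Coprime d) (c : ℕ) : ∃ i < d, z ^ (r * i + c) = 1 := by
  have : NeZero d := ⟨hd.ne'⟩
  have hc : ((z ^ c)⁻¹) ^ d = 1 := by
    rw [inv_pow, ← pow_mul, mul_comm, pow_mul, hz.pow_eq_one, one_pow, inv_one]
  obtain ⟨i, hi, h⟩ := (hz.pow_of_coprime r hr).eq_pow_of_pow_eq_one hc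
  refine ⟨i, hi, ?_⟩
  rw [pow_add, pow_mul, h, inv_mul_cancel₀ (pow_ne_zero c (hz.ne_zero hd.ne'))]

end PrimitiveRoots

theorem exists_prod_one_sub_mul_div_eq {F : Type*} [Field F] {R : Subring F} {e : F}
    {α δ : ℕ → F} {k : ℕ} (he : e ∈ R) (hα : ∀ i < k, α i ∈ R) (hδ : ∀ i < k, δ i ∈ R)
    (hne : ∀ i < k, 1 - e * δ i ≠ 0) (hinv : ∀ i < k, (1 - e * δ i)⁻¹ ∈ R) :
    ∃ ρ ∈ R, ∏ i ∈ range k, (1 - e * α i) / (1 - e * δ i) =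
      1 - e * ∑ i ∈ range k, (α i - δ i) + e ^ 2 * ρ := by
  induction k with
  | zero => exact ⟨0, R.zero_mem, by simp⟩
  | succ k ih =>
    obtain ⟨ρ, hρ, hprod⟩ := ih (fun i hi ↦ hα i (by lia)) (fun i hi ↦ hδ i (by lia))
      (fun i hi ↦ hne i (by lia)) (fun i hi ↦ hinv i (by lia))
    have hk := k.lt_succ_self
    have hS : ∑ i ∈ range k, (α i - δ i) ∈ R := sum_mem fun i hi ↦
      sub_mem (hα i ((mem_range.1 hi).trans hk)) (hδ i ((mem_range.1 hi).trans hk))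
    rw [prod_range_succ, sum_range_succ, hprod]
    generalize ∑ i ∈ range k, (α i - δ i) = S at hS
    refine ⟨(ρ * (1 - e * α k) + (S - δ k) * (α k - δ k)) * (1 - e * δ k)⁻¹, ?_, ?_⟩
    · exact mul_mem (add_mem (mul_mem hρ (sub_mem (one_mem R) (mul_mem he (hα k hk))))
        (mul_mem (sub_mem hS (hδ k hk)) (sub_mem (hα k hk) (hδ k hk)))) (hinv k hk)
    · have := hne k hk
      field_simp
      ring

section LocalBehavior

variable {K L : Type*} [Field K] [Field L] [Algebra K L] {z : L} {r c d k N : ℕ}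

theorem X_pow_ne_one {m : ℕ} (hm : 0 < m) : (RatFunc.X : RatFunc K) ^ m ≠ 1 := by
  rw [← RatFunc.algebraMap_X, ← map_pow, ← map_one (algebraMap (Polynomial K) (RatFunc K))]
  intro h
  have := congrArg Polynomial.natDegree (RatFunc.algebraMap_injective K h)
  simp [hm.ne'] at this

namespace HasValueAt

theorem koebe_X_pow {m : ℕ} (hm : z ^ m ≠ 1) :
    HasValueAt z (koebe (RatFunc.X ^ m : RatFunc K)) (koebe (z ^ m)) :=
  (X.pow m).div ((one_sub_X_pow m).pow 2) (pow_ne_zero 2 (sub_ne_zero.2 hm.symm))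

theorem pochRatio_X (hv : ∀ i < k, z ^ (r * i + r) ≠ 1) :
    HasValueAt z (pochRatio (RatFunc.X : RatFunc K) r c k) (pochRatio z r c k) :=
  prod fun i hi ↦ (one_sub_X_pow _).div (one_sub_X_pow _)
    (sub_ne_zero.2 (hv i (mem_range.1 hi)).symm)

theorem koebeSum_X (hu : ∀ i < k, z ^ (r * i + c) ≠ 1) (hv : ∀ i < k, z ^ (r * i + r) ≠ 1) :
    HasValueAt z (koebeSum (RatFunc.X : RatFunc K) r c k) (koebeSum z r c k) :=
  sum fun i hi ↦ (koebe_X_pow (hu i (mem_range.1 hi))).sub (koebe_X_pow (hv i (mem_range.1 hi)))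

theorem summand_X (hz : z ≠ 1) (hv : ∀ i < k, z ^ (3 * i + 3) ≠ 1) :
    HasValueAt z (summand (RatFunc.X : RatFunc K) k) (summand z k) :=
  (((one_sub_X_pow _).div (one.sub X) (sub_ne_zero.2 hz.symm)).mul ((pochRatio_X hv).pow 6)).mul
    (X.pow _)

end HasValueAt

theorem exists_koebeRatio_X_eq {e : RatFunc K} (he : e ∈ vanishingAt K z)
    (hu : ∀ i < k, z ^ (r * i + c) ≠ 1) (hv : ∀ i < k, z ^ (r * i + r) ≠ 1) :
    ∃ ρ ∈ regularAt K z, koebeRatio e RatFunc.X r c k =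
      1 - e * koebeSum RatFunc.X r c k + e ^ 2 * ρ := by
  have hden (i : ℕ) (hi : i < k) :
      HasValueAt z (1 - e * koebe (RatFunc.X ^ (r * i + r) : RatFunc K)) 1 := by
    simpa using HasValueAt.one.sub (he.mul (.koebe_X_pow (hv i hi)))
  exact exists_prod_one_sub_mul_div_eq (HasValueAt.mem_regularAt he)
    (fun i hi ↦ (HasValueAt.koebe_X_pow (hu i hi)).mem_regularAt)
    (fun i hi ↦ (HasValueAt.koebe_X_pow (hv i hi)).mem_regularAt)
    (fun i hi ↦ (hden i hi).ne_zero one_ne_zero)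
    (fun i hi ↦ ((hden i hi).inv one_ne_zero).mem_regularAt)

theorem sum_summand_mul_one_sub_koebeRatio_sq_mem [CharZero L] (hN : 0 < N)
    (hz : IsPrimitiveRoot z (3 * N + 1)) {e : RatFunc K} (he : e ∈ vanishingAt K z) :
    ∃ W ∈ vanishingAt K z, ∑ k ∈ range (N + 1), summand RatFunc.X k *
      (1 - koebeRatio e RatFunc.X 3 1 k) ^ 2 = e ^ 2 * W := by
  have hu {k : ℕ} (hk : k ∈ range (N + 1)) (i : ℕ) (hi : i < k) : z ^ (3 * i + 1) ≠ 1 :=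
    hz.pow_ne_one_of_pos_of_lt (by lia) (by have := mem_range.1 hk; lia)
  have hv {k : ℕ} (hk : k ∈ range (N + 1)) (i : ℕ) (hi : i < k) : z ^ (3 * i + 3) ≠ 1 :=
    hz.pow_ne_one_of_pos_of_lt (by lia) (by have := mem_range.1 hk; lia)
  choose! ρ hρ hexp using fun k (hk : k ∈ range (N + 1)) ↦ exists_koebeRatio_X_eq he (hu hk) (hv hk)
  have hvalue : HasValueAt z (∑ k ∈ range (N + 1),
      summand RatFunc.X k * (koebeSum RatFunc.X 3 1 k - ρ k * e) ^ 2)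
      (∑ k ∈ range (N + 1), summand z k * koebeSum z 3 1 k ^ 2) := by
    refine .sum fun k hk ↦ (HasValueAt.summand_X (hz.ne_one (by lia)) (hv hk)).mul
      (.pow ?_ 2)
    have hrem : ρ k * e ∈ vanishingAt K z := mul_mem_of_mem_regularAt (hρ k hk) he
    simpa only [sub_zero] using (HasValueAt.koebeSum_X (hu hk) (hv hk)).sub hrem
  rw [sum_summand_mul_eq_zero hz (by lia) hz.pow_eq_one fun j k hjk ↦ by
    rw [koebeSum_reflect (by rw [hjk, hz.pow_eq_one])]] at hvalue
  refine ⟨_, hvalue, ?_⟩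
  rw [mul_sum]
  refine sum_congr rfl fun k hk ↦ ?_
  rw [hexp k hk]
  ring

theorem one_sub_X_pow_mem_vanishingAt {m : ℕ} (hm : z ^ m = 1) :
    1 - (RatFunc.X : RatFunc K) ^ m ∈ vanishingAt K z := by
  simpa only [hm, sub_self] using! HasValueAt.one_sub_X_pow (K := K) (z := z) m

theorem inv_koebe_X_pow_mem_vanishingAt {m : ℕ} (hm : z ^ m = 1) :
    (koebe ((RatFunc.X : RatFunc K) ^ m))⁻¹ ∈ vanishingAt K z := by
  have hX := HasValueAt.X (K := K) (z := z) |>.pow m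
  have := ((one_sub_X_pow_mem_vanishingAt hm).pow 2).div hX (by simp [hm])
  rwa [zero_pow two_ne_zero, zero_div, ← inv_koebe] at this

theorem exists_mul_two_sub_koebeRatio_sub_closedForm_eq (hz : IsPrimitiveRoot z (3 * N + 1))
    (hN : 0 < N) :
    ∃ W ∈ vanishingAt K z, (1 - RatFunc.X ^ (3 * N + 1)) / (1 - RatFunc.X) *
        pochRatio RatFunc.X 3 2 N ^ 3 *
        (2 - koebeRatio (koebe (RatFunc.X ^ (3 * N + 1)))⁻¹ RatFunc.X 3 2 N) -
      closedForm RatFunc.X N = (1 - RatFunc.X ^ (3 * N + 1)) ^ 4 * W := by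
  have hu (i : ℕ) (hi : i < N) : z ^ (3 * i + 2) ≠ 1 :=
    hz.pow_ne_one_of_pos_of_lt (by lia) (by lia)
  have hv (i : ℕ) (hi : i < N) : z ^ (3 * i + 3) ≠ 1 :=
    hz.pow_ne_one_of_pos_of_lt (by lia) (by lia)
  obtain ⟨ρ, hρ, hB⟩ := exists_koebeRatio_X_eq (K := K)
    (inv_koebe_X_pow_mem_vanishingAt hz.pow_eq_one) hu hv
  have hA := (HasValueAt.pochRatio_X (K := K) (c := 2) hv).mem_regularAt
  have hT := (HasValueAt.koebeSum_X (K := K) hu hv).mem_regularAt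
  have hQ := one_sub_X_pow_mem_vanishingAt (K := K) hz.pow_eq_one
  have hQinv := (((HasValueAt.X (K := K) (z := z)).pow (3 * N + 1)).inv
    (by simp [hz.pow_eq_one])).mem_regularAt
  have hXinv := ((HasValueAt.one_sub_X_pow (K := K) (z := z) 1).inv
    (sub_ne_zero.2 (hz.pow_ne_one_of_pos_of_lt one_ne_zero (by lia)).symm)).mem_regularAt
  have hQ0 : (RatFunc.X : RatFunc K) ^ (3 * N + 1) ≠ 0 := pow_ne_zero _ RatFunc.X_ne_zero
  rw [closedForm, hB, inv_koebe]
  rw [pow_one] at hXinv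
  generalize (RatFunc.X : RatFunc K) ^ (3 * N + 1) = Q at *
  refine ⟨_, mul_mem_of_mem_regularAt (mul_mem (mul_mem hXinv (pow_mem hA 3))
    (mul_mem hQinv (sub_mem hT (mul_mem hQinv hρ)))) hQ, ?_⟩
  field_simp
  ring

theorem sum_summand_sub_closedForm_mem_pow_five [CharZero L] (hz : IsPrimitiveRoot z (3 * N + 1))
    (hN : 0 < N) :
    ∑ k ∈ range (N + 1), summand (RatFunc.X : RatFunc K) k - closedForm RatFunc.X N ∈
      vanishingAt K z ^ 5 := by
  obtain ⟨W, hW, hsum⟩ := sum_summand_mul_one_sub_koebeRatio_sq_mem hN hz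
    (inv_koebe_X_pow_mem_vanishingAt (K := K) hz.pow_eq_one)
  obtain ⟨W', hW', hclosed⟩ := exists_mul_two_sub_koebeRatio_sub_closedForm_eq (K := K) hz hN
  have hQ := one_sub_X_pow_mem_vanishingAt (K := K) hz.pow_eq_one
  have hQinv := ((((HasValueAt.X (K := K) (z := z)).pow (3 * N + 1)).inv
    (by simp [hz.pow_eq_one])).pow 2).mem_regularAt
  rw [sum_summand_eq (fun m ↦ X_pow_ne_one) RatFunc.X_ne_zero, add_sub_assoc, hclosed, hsum,
    inv_koebe, div_pow, ← pow_mul, div_mul_eq_mul_div, mul_div_assoc, div_eq_inv_mul, ← mul_add,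
    ← inv_pow, pow_succ]
  exact Submodule.mul_mem_mul (Submodule.pow_mem_pow _ hQ 4)
    (add_mem (mul_mem_of_mem_regularAt hQinv hW) hW')

theorem summand_X_mem_pow_five {k : ℕ} (hz : IsPrimitiveRoot z (3 * N + 1)) (hNk : N < k)
    (hk : k ≤ 3 * N) : summand (RatFunc.X : RatFunc K) k ∈ vanishingAt K z ^ 5 := by
  have h3 : Nat.Coprime 3 (3 * N + 1) := by simp
  have hpoch : pochRatio (RatFunc.X : RatFunc K) 3 1 k ∈ vanishingAt K z := by
    have := HasValueAt.pochRatio_X (K := K) (c := 1) (k := k) fun i hi ↦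
      pow_mul_add_self_ne_one hz h3 (by lia)
    rwa [pochRatio_eq_zero hNk hz.pow_eq_one] at this
  have hfactor := (((HasValueAt.one_sub_X_pow (K := K) (z := z) (6 * k + 1)).div
    (HasValueAt.one_sub_X_pow 1) (sub_ne_zero.2 (hz.pow_ne_one_of_pos_of_lt one_ne_zero
      (by lia)).symm)).mul (HasValueAt.X.pow (3 * k))).mul hpoch |>.mem_regularAt
  rw [summand, mul_right_comm, pow_succ' _ 5, ← mul_assoc]
  simpa only [pow_one] using mul_mem_of_mem_regularAt hfactor (Submodule.pow_mem_pow _ hpoch 5)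

theorem div_one_sub_X_pow_mem_regularAt [CharZero L] {f : RatFunc K} (hf : f ∈ vanishingAt K z)
    {m : ℕ} (hm : m ≠ 0) : f / (1 - RatFunc.X ^ m) ∈ regularAt K z := by
  obtain hzm | hzm := ne_or_eq (z ^ m) 1
  · exact (HasValueAt.div hf (.one_sub_X_pow m) (sub_ne_zero.2 hzm.symm)).mem_regularAt
  obtain ⟨h, hh⟩ : minpoly K z ∣ 1 - Polynomial.X ^ m := minpoly.dvd K z (by simp [hzm])
  obtain ⟨g, hg, rfl⟩ := exists_eq_minpoly_pow_mul (e := 1) (by rwa [pow_one])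
  have hderiv : Polynomial.aeval z (Polynomial.derivative (minpoly K z)) *
      Polynomial.aeval z h = -(m * z ^ (m - 1)) := by
    have := congrArg (fun p ↦ Polynomial.aeval z (Polynomial.derivative p)) hh
    simpa [Polynomial.derivative_X_pow] using this.symm
  have hz0 : z ≠ 0 := by
    rintro rfl
    simp [hm] at hzm
  have hne : Polynomial.aeval z h ≠ 0 := by
    refine right_ne_zero_of_mul (hderiv.trans_ne ?_)
    simp [hm, hz0]
  have hval := (HasValueAt.polynomial (K := K) h).inv hne
  have hX : (1 - RatFunc.X ^ m : RatFunc K) = algebraMap _ _ (minpoly K z) * algebraMap _ _ h := by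
    rw [← map_mul, ← hh]; simp
  have hX0 : (1 - RatFunc.X ^ m : RatFunc K) ≠ 0 := sub_ne_zero.2 (X_pow_ne_one (by lia)).symm
  rw [hX, pow_one, mul_div_mul_left _ _ (left_ne_zero_of_mul (hX ▸ hX0)), div_eq_mul_inv]
  exact mul_mem hg hval.mem_regularAt

theorem pochRatio_X_mul_mem_regularAt [CharZero L] {r : ℕ} (hz : IsPrimitiveRoot z d)
    (hr0 : r ≠ 0) (hr : r.Coprime d) (c m : ℕ) :
    pochRatio (RatFunc.X : RatFunc K) r c (d * m) ∈ regularAt K z := by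
  induction m with
  | zero => exact one_mem _
  | succ m ih =>
    rw [mul_add_one, pochRatio_add]
    refine mul_mem ih ?_
    obtain _ | d := d
    · exact one_mem _
    have hnum : ∏ i ∈ range (d + 1), (1 - (RatFunc.X : RatFunc K) ^ (r * ((d + 1) * m + i) + c)) ∈
        vanishingAt K z := by
      obtain ⟨i, hi, h⟩ := exists_pow_mul_add_eq_one hz d.succ_pos hr c
      have hzero : ∏ i ∈ range (d + 1), (1 - z ^ (r * ((d + 1) * m + i) + c)) = 0 :=
        prod_eq_zero (mem_range.2 hi) (by rw [pow_mul_add_period hz.pow_eq_one, h, sub_self])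
      rw [mem_vanishingAt, ← hzero]
      exact .prod fun i _ ↦ .one_sub_X_pow _
    have hden := (HasValueAt.prod (K := K) fun i (_ : i ∈ range d) ↦
      .one_sub_X_pow (z := z) (r * ((d + 1) * m + i) + r)).inv
      (prod_ne_zero_iff.2 fun i hi ↦ sub_ne_zero.2 (by
        rw [pow_mul_add_period hz.pow_eq_one]
        exact (pow_mul_add_self_ne_one hz hr (by simpa using hi)).symm))
    rw [prod_div_distrib, prod_range_succ (fun i ↦ 1 - RatFunc.X ^ (r * ((d + 1) * m + i) + r)),
      mul_comm (∏ i ∈ range d, _), ← div_div, div_eq_mul_inv (_ / _)]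
    exact mul_mem (div_one_sub_X_pow_mem_regularAt hnum (by positivity)) hden.mem_regularAt

theorem HasValueAt.pochRatio_X_add {r c m s : ℕ} (hz : IsPrimitiveRoot z d) (hr : r.Coprime d)
    (hs : s < d) {a : L} (ha : HasValueAt z (pochRatio (RatFunc.X : RatFunc K) r c (d * m)) a) :
    HasValueAt z (pochRatio (RatFunc.X : RatFunc K) r c (d * m + s)) (a * pochRatio z r c s) := by
  rw [pochRatio_add]
  refine ha.mul (.prod fun i hi ↦ ?_)
  have := (HasValueAt.one_sub_X_pow (K := K) (z := z) (r * (d * m + i) + c)).div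
    (.one_sub_X_pow (r * (d * m + i) + r)) (sub_ne_zero.2 (by
        rw [pow_mul_add_period hz.pow_eq_one]
        exact (pow_mul_add_self_ne_one hz hr (by have := mem_range.1 hi; lia)).symm))
  rwa [pow_mul_add_period hz.pow_eq_one, pow_mul_add_period hz.pow_eq_one] at this

theorem sum_summand_X_add_mem_vanishingAt [CharZero L] (hz : IsPrimitiveRoot z d) (hd : 1 < d)
    (h3 : Nat.Coprime 3 d) (m : ℕ) {t : ℕ} (ht : t ≤ d)
    (h : ∑ s ∈ range t, summand z s = 0) :
    ∑ s ∈ range t, summand (RatFunc.X : RatFunc K) (d * m + s) ∈ vanishingAt K z := by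
  obtain ⟨a, ha⟩ := mem_regularAt.1 (pochRatio_X_mul_mem_regularAt (K := K) hz three_ne_zero h3 1 m)
  have hterm (s : ℕ) (hs : s ∈ range t) :
      HasValueAt z (summand (RatFunc.X : RatFunc K) (d * m + s)) (a ^ 6 * summand z s) := by
    have hpoch := (HasValueAt.pochRatio_X_add hz h3 ((mem_range.1 hs).trans_le ht) ha).pow 6
    have hvalue : a ^ 6 * summand z s = (1 - z ^ (6 * (d * m + s) + 1)) / (1 - z) *
        (a * pochRatio z 3 1 s) ^ 6 * z ^ (3 * (d * m + s) + 0) := by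
      rw [pow_mul_add_period hz.pow_eq_one, pow_mul_add_period hz.pow_eq_one, summand]
      ring
    rw [hvalue]
    exact (((HasValueAt.one_sub_X_pow _).div (HasValueAt.one.sub .X)
      (sub_ne_zero.2 (hz.ne_one hd).symm)).mul hpoch).mul (.pow .X _)
  have := HasValueAt.sum hterm
  rwa [← mul_sum, h, mul_zero] at this

theorem sum_summand_X_mem_vanishingAt [CharZero L] (hz : IsPrimitiveRoot z d) (hd : 1 < d)
    (h3 : Nat.Coprime 3 d) (hperiod : ∑ s ∈ range d, summand z s = 0) (m : ℕ) {t : ℕ} (ht : t ≤ d)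
    (h : ∑ s ∈ range t, summand z s = 0) :
    ∑ k ∈ range (d * m + t), summand (RatFunc.X : RatFunc K) k ∈ vanishingAt K z := by
  rw [sum_range_add]
  refine add_mem ?_ (sum_summand_X_add_mem_vanishingAt hz hd h3 m ht h)
  induction m with
  | zero => exact zero_mem _
  | succ m ih =>
    rw [mul_add_one, sum_range_add]
    exact add_mem ih (sum_summand_X_add_mem_vanishingAt hz hd h3 m le_rfl hperiod)

theorem one_sub_X_pow_sq_mul_koebe_mem_regularAt [CharZero L] {l m : ℕ} (hl : z ^ l = 1)
    (hm : m ≠ 0) :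
    (1 - RatFunc.X ^ l) ^ 2 * koebe (RatFunc.X ^ m : RatFunc K) ∈ regularAt K z := by
  have hratio := div_one_sub_X_pow_mem_regularAt (one_sub_X_pow_mem_vanishingAt (K := K) hl) hm
  have hX := ((HasValueAt.X (K := K) (z := z)).pow m).mem_regularAt
  rw [koebe, mul_div_left_comm, ← div_pow]
  exact mul_mem hX (pow_mem hratio 2)

theorem pochRatio_X_mem_regularAt [CharZero L] {r : ℕ} (hz : IsPrimitiveRoot z d) (hd : 0 < d)
    (hr0 : r ≠ 0) (hr : r.Coprime d) (c k : ℕ) :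
    pochRatio (RatFunc.X : RatFunc K) r c k ∈ regularAt K z := by
  obtain ⟨a, ha⟩ := mem_regularAt.1 (pochRatio_X_mul_mem_regularAt (K := K) hz hr0 hr c (k / d))
  have := (ha.pochRatio_X_add hz hr (k.mod_lt hd)).mem_regularAt
  rwa [Nat.div_add_mod] at this

theorem closedForm_X_mem_vanishingAt [CharZero L] (hz : IsPrimitiveRoot z d) (hd : 1 < d)
    (h : z ^ (3 * N + 1) = 1) : closedForm (RatFunc.X : RatFunc K) N ∈ vanishingAt K z := by
  have hQ := one_sub_X_pow_mem_vanishingAt (K := K) h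
  have hX := (HasValueAt.X (K := K) (z := z)).mem_regularAt
  have hXinv := ((HasValueAt.one.sub HasValueAt.X).inv (sub_ne_zero.2 (hz.ne_one hd).symm)
    : HasValueAt z (1 - RatFunc.X : RatFunc K)⁻¹ _).mem_regularAt
  have hA := pochRatio_X_mem_regularAt (K := K) hz (by lia) three_ne_zero
    (coprime_three_of_pow_eq_one hz h) 2 N
  have hT : (1 - RatFunc.X ^ (3 * N + 1)) ^ 2 * koebeSum (RatFunc.X : RatFunc K) 3 2 N ∈
      regularAt K z := by
    rw [koebeSum, mul_sum]
    refine sum_mem fun i _ ↦ ?_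
    rw [mul_sub]
    exact sub_mem (one_sub_X_pow_sq_mul_koebe_mem_regularAt h (by lia))
      (one_sub_X_pow_sq_mul_koebe_mem_regularAt h (by lia))
  have htwo : (2 : RatFunc K) - RatFunc.X ^ (3 * N + 1) ∈ regularAt K z :=
    sub_mem (ofNat_mem _ 2) (pow_mem hX _)
  rw [closedForm, div_eq_mul_inv, mul_assoc, mul_assoc, mul_comm, mul_right_comm _ (2 - _)]
  exact mul_mem_of_mem_regularAt (mul_mem hXinv (mul_mem (pow_mem hA 3)
    (add_mem (one_mem _) (mul_mem hT htwo)))) hQ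

theorem sum_summand_sub_closedForm_mem_vanishingAt [CharZero L] (hz : IsPrimitiveRoot z d)
    (hd : 1 < d) (h : z ^ (3 * N + 1) = 1) {M : ℕ} (hM : M = N ∨ M = 3 * N) :
    ∑ k ∈ range (M + 1), summand (RatFunc.X : RatFunc K) k - closedForm RatFunc.X N ∈
      vanishingAt K z := by
  refine sub_mem ?_ (closedForm_X_mem_vanishingAt hz hd h)
  have h3 := coprime_three_of_pow_eq_one hz h
  have hlt : N % d < d := N.mod_lt (by lia)
  have hrem : z ^ (3 * (N % d) + 1) = 1 := by
    rw [← pow_mul_add_period hz.pow_eq_one 3 1 (N / d), Nat.div_add_mod, h]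
  have hperiod := sum_range_summand_eq_zero hz hrem hlt le_rfl
  obtain rfl | rfl := hM
  · rw [← Nat.div_add_mod M d, add_assoc]
    exact sum_summand_X_mem_vanishingAt hz hd h3 hperiod _ hlt
      (sum_range_summand_eq_zero hz hrem (Nat.lt_succ_self _) hlt)
  · rw [← Nat.mul_div_cancel' (hz.dvd_of_pow_eq_one _ h), ← add_zero (d * _)]
    exact sum_summand_X_mem_vanishingAt hz hd h3 hperiod _ d.zero_le (sum_range_zero _)

theorem sum_summand_sub_closedForm_mem_vanishingAt_pow_five [CharZero L] (hN : 0 < N)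
    (hz : IsPrimitiveRoot z (3 * N + 1)) {M : ℕ} (hNM : N ≤ M) (hM : M ≤ 3 * N) :
    ∑ k ∈ range (M + 1), summand (RatFunc.X : RatFunc K) k - closedForm RatFunc.X N ∈
      vanishingAt K z ^ 5 := by
  rw [← sum_range_add_sum_Ico _ (Nat.succ_le_succ hNM), add_sub_right_comm]
  refine add_mem (sum_summand_sub_closedForm_mem_pow_five hz hN) (sum_mem fun k hk ↦ ?_)
  have := mem_Ico.1 hk
  exact summand_X_mem_pow_five hz (by lia) (by lia)

end LocalBehavior

section Specialization

theorem qcong_sum_summand_closedForm_cyclotomic {N d M : ℕ} (hN : 0 < N) (hd : 1 < d)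
    (hdvd : d ∣ 3 * N + 1) (hM : M = N ∨ M = 3 * N) :
    qcong (∑ k ∈ range (M + 1), summand q k) (closedForm q N)
      (Polynomial.cyclotomic d ℚ ^ if d = 3 * N + 1 then 5 else 1) := by
  have hz := Complex.isPrimitiveRoot_exp d (by lia)
  refine qcong_cyclotomic_pow (by lia) hz ?_
  split_ifs with hdn
  · subst hdn
    exact sum_summand_sub_closedForm_mem_vanishingAt_pow_five hN hz (by lia) (by lia)
  · rw [pow_one]
    exact sum_summand_sub_closedForm_mem_vanishingAt hz hd
      (orderOf_dvd_iff_pow_eq_one.1 (hz.eq_orderOf ▸ hdvd)) hM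

theorem prod_cyclotomic_pow_eq {n : ℕ} (hn : 1 < n) :
    ∏ d ∈ n.divisors.erase 1, Polynomial.cyclotomic d ℚ ^ (if d = n then 5 else 1) =
      (∑ i ∈ range n, Polynomial.X ^ i) * Polynomial.cyclotomic n ℚ ^ 4 := by
  have hmem : n ∈ n.divisors.erase 1 := by simp [hn.ne', (zero_lt_one.trans hn).ne']
  rw [← Polynomial.prod_cyclotomic_eq_geom_sum (zero_lt_one.trans hn), ← mul_prod_erase _ _ hmem,
    ← mul_prod_erase _ _ hmem, if_pos rfl, prod_congr rfl fun d hd ↦ by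
      rw [if_neg (ne_of_mem_erase hd), pow_one]]
  ring

theorem qcong_sum_summand_closedForm {N M : ℕ} (hM : M = N ∨ M = 3 * N) :
    qcong (∑ k ∈ range (M + 1), summand q k) (closedForm q N)
      ((∑ i ∈ range (3 * N + 1), Polynomial.X ^ i) * Polynomial.cyclotomic (3 * N + 1) ℚ ^ 4) := by
  obtain rfl | hN := N.eq_zero_or_pos
  · obtain rfl : M = 0 := by lia
    exact ⟨0, 1, isCoprime_one_left, by simp [summand, closedForm, pochRatio, koebeSum]⟩
  rw [← prod_cyclotomic_pow_eq (by lia)]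
  refine qcong_prod (fun d _ d' _ hne ↦
    (Polynomial.cyclotomic.isCoprime_rat hne).pow) fun d hd ↦ ?_
  obtain ⟨hd1, hdvd, -⟩ := by simpa only [mem_erase, Nat.mem_divisors] using hd
  have := Nat.pos_of_dvd_of_pos hdvd (Nat.succ_pos _)
  exact qcong_sum_summand_closedForm_cyclotomic hN (by lia) hdvd hM

theorem qint_natCast (m : ℕ) : qint m = (1 - q ^ m) / (1 - q) := by rw [qint, zpow_natCast]

theorem q_pow_div_qint_sq (m : ℕ) : q ^ (m : ℤ) / qint m ^ 2 = (1 - q) ^ 2 * koebe (q ^ m) := by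
  rw [qint_natCast, zpow_natCast, koebe, div_pow, div_div_eq_mul_div, mul_comm, mul_div_assoc]

theorem qint_mul_qpoch_eq_summand (k : ℕ) :
    qint (6 * k + 1) * (qpoch q (q ^ 3) k ^ 6 / qpoch (q ^ 3) (q ^ 3) k ^ 6) * q ^ (3 * k) =
      summand q k := by
  have hqint := qint_natCast (6 * k + 1)
  push_cast at hqint
  rw [hqint, ← div_pow, summand, pochRatio_eq_div, pow_one]
  rfl

theorem sum_qint_eq_koebeSum (N : ℕ) :
    ∑ j ∈ Icc 1 N, (q ^ (3 * (j : ℤ) - 1) / qint (3 * j - 1) ^ 2 -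
        q ^ (3 * (j : ℤ)) / qint (3 * j) ^ 2) =
      (1 - q) ^ 2 * koebeSum q 3 2 N := by
  rw [← Ico_add_one_right_eq_Icc, sum_Ico_eq_sum_range, Nat.add_sub_cancel, koebeSum, mul_sum]
  refine sum_congr rfl fun i _ ↦ ?_
  rw [mul_sub, ← q_pow_div_qint_sq, ← q_pow_div_qint_sq]
  push_cast
  ring_nf

theorem qint_mul_qpoch_eq_closedForm (N : ℕ) :
    qint ((3 * N + 1 : ℕ) : ℤ) *
        (qpoch (q ^ 2) (q ^ 3) N ^ 3 / qpoch (q ^ 3) (q ^ 3) N ^ 3) *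
        (1 + qint ((3 * N + 1 : ℕ) : ℤ) ^ 2 * (2 - q ^ (3 * N + 1)) *
          ∑ j ∈ Icc 1 N, (q ^ (3 * (j : ℤ) - 1) / qint (3 * j - 1) ^ 2 -
            q ^ (3 * (j : ℤ)) / qint (3 * j) ^ 2)) =
      closedForm q N := by
  have hq : 1 - q ≠ 0 := sub_ne_zero.2 (by simpa using! (X_pow_ne_one one_pos).symm)
  rw [sum_qint_eq_koebeSum, qint_natCast, mul_right_comm _ (2 - _), ← mul_assoc _ ((1 - q) ^ 2),
    div_pow _ (1 - q), div_mul_cancel₀ _ (pow_ne_zero 2 hq), mul_right_comm _ _ (2 - _), ← div_pow,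
    closedForm, pochRatio_eq_div]
  rfl

end Specialization

theorem stmt1 (n : ℕ) (hpos : 0 < n) (hmod : n % 3 = 1) (M : ℕ)
    (hM : M = (n - 1) / 3 ∨ M = n - 1) :
    qcong
      (∑ k ∈ Finset.range (M + 1),
        qint (6 * k + 1) * (qpoch q (q ^ 3) k ^ 6 / qpoch (q ^ 3) (q ^ 3) k ^ 6) *
          q ^ (3 * k))
      (qint n *
        (qpoch (q ^ 2) (q ^ 3) ((n - 1) / 3) ^ 3 /
          qpoch (q ^ 3) (q ^ 3) ((n - 1) / 3) ^ 3) *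
        (1 + qint n ^ 2 * (2 - q ^ n) *
          ∑ j ∈ Finset.Icc 1 ((n - 1) / 3),
            (q ^ (3 * (j : ℤ) - 1) / qint (3 * j - 1) ^ 2 -
              q ^ (3 * (j : ℤ)) / qint (3 * j) ^ 2)))
      ((∑ i ∈ Finset.range n, Polynomial.X ^ i) * Polynomial.cyclotomic n ℚ ^ 4) := by
  obtain ⟨N, rfl⟩ : ∃ N, n = 3 * N + 1 := ⟨n / 3, by lia⟩
  have hN : (3 * N + 1 - 1) / 3 = N := by lia
  rw [hN, qint_mul_qpoch_eq_closedForm, sum_congr rfl fun k _ ↦ qint_mul_qpoch_eq_summand k]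
  exact qcong_sum_summand_closedForm (by lia)
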